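/- Let d be a differential on a polarized bigraded Hodge–Lefschetz structure (H, N₁, N₂, ψ). For each (a, b) set L_{a,b} := ker(d : H_{a,b} → H_{a−1,b−1}) / d(H_{a+1,b+1}). Then N₁, N₂ and ψ descend to well-defined operators and a bilinear form on L := ⨁_{(a,b)} L_{a,b}, and (L, N₁, N₂) together with the induced form ψ is again a polarized bigraded Hodge–Lefschetz structure. Moreover, under the isomorphism L_{a,b} ≅ ker(Δ) ∩ H_{a,b}, the primitive part of L_{a,b} corresponds to ker(Δ) ∩ P_{a,b}, i.e., the decomposition of L into primitive parts is induced by that of H. -/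

import Mathlib

namespace HLS

variable {H : Type} [AddCommGroup H] [Module ℝ H]

/-- The primitive part `P_{a,b} = H_{a,b} ∩ ker(N₁^{a+1}) ∩ ker(N₂^{b+1})`, for `a, b ≥ 0`. -/
def prim (Hgr : ℤ → ℤ → Submodule ℝ H) (N₁ N₂ : H →ₗ[ℝ] H) (a b : ℕ) : Submodule ℝ H :=
  Hgr (a : ℤ) (b : ℤ) ⊓ LinearMap.ker (N₁ ^ (a + 1)) ⊓ LinearMap.ker (N₂ ^ (b + 1))

/-- A bigraded Hodge–Lefschetz structure: a finite-dimensional real vector space `H`,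
a direct sum decomposition `H = ⨁_{(a,b)} H_{a,b}`, and commuting operators `N₁, N₂` of
bidegrees `(-2,0)` and `(0,-2)` with `N₁^a : H_{a,b} → H_{-a,b}` and
`N₂^b : H_{a,b} → H_{a,-b}` isomorphisms for `a ≥ 0`, resp. `b ≥ 0`. -/
structure IsHL (Hgr : ℤ → ℤ → Submodule ℝ H) (N₁ N₂ : H →ₗ[ℝ] H) : Prop where
  findim : FiniteDimensional ℝ H
  internal : DirectSum.IsInternal (fun p : ℤ × ℤ => Hgr p.1 p.2)
  mapN₁ : ∀ a b : ℤ, ∀ x ∈ Hgr a b, N₁ x ∈ Hgr (a - 2) b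
  mapN₂ : ∀ a b : ℤ, ∀ x ∈ Hgr a b, N₂ x ∈ Hgr a (b - 2)
  comm : N₁ ∘ₗ N₂ = N₂ ∘ₗ N₁
  bijN₁ : ∀ (a : ℕ) (b : ℤ),
    Submodule.map (N₁ ^ a) (Hgr (a : ℤ) b) = Hgr (-(a : ℤ)) b ∧
    ∀ x ∈ Hgr (a : ℤ) b, (N₁ ^ a) x = 0 → x = 0
  bijN₂ : ∀ (a : ℤ) (b : ℕ),
    Submodule.map (N₂ ^ b) (Hgr a (b : ℤ)) = Hgr a (-(b : ℤ)) ∧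
    ∀ x ∈ Hgr a (b : ℤ), (N₂ ^ b) x = 0 → x = 0

/-- A polarization on a bigraded Hodge–Lefschetz structure. -/
structure IsPolarization (Hgr : ℤ → ℤ → Submodule ℝ H) (N₁ N₂ : H →ₗ[ℝ] H)
    (ψ : H →ₗ[ℝ] H →ₗ[ℝ] ℝ) : Prop where
  orth : ∀ a b a' b' : ℤ, ¬ (a + a' = 0 ∧ b + b' = 0) →
    ∀ x ∈ Hgr a b, ∀ y ∈ Hgr a' b', ψ x y = 0
  primSymm : ∀ a b : ℕ, ∀ x ∈ prim Hgr N₁ N₂ a b, ∀ y ∈ prim Hgr N₁ N₂ a b,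
    ψ x (((N₁ ^ a) ∘ₗ (N₂ ^ b)) y) = ψ y (((N₁ ^ a) ∘ₗ (N₂ ^ b)) x)
  primPosDef : ∀ a b : ℕ, ∀ x ∈ prim Hgr N₁ N₂ a b, x ≠ 0 →
    0 < ψ x (((N₁ ^ a) ∘ₗ (N₂ ^ b)) x)
  skew₁ : ∀ x y : H, ψ (N₁ x) y + ψ x (N₁ y) = 0
  skew₂ : ∀ x y : H, ψ (N₂ x) y + ψ x (N₂ y) = 0

/-- The defining property of the operator `w`:
`w(N₁^r N₂^s x) = (-1)^{r+s} (r!/(a-r)!)(s!/(b-s)!) N₁^{a-r} N₂^{b-s} x` for `x ∈ P_{a,b}`,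
`r ≤ a`, `s ≤ b`, and `w(N₁^r N₂^s x) = 0` otherwise.  (By the primitive decomposition this
determines `w` uniquely.) -/
def IsW (Hgr : ℤ → ℤ → Submodule ℝ H) (N₁ N₂ : H →ₗ[ℝ] H) (w : H →ₗ[ℝ] H) : Prop :=
  ∀ a b r s : ℕ, ∀ x ∈ prim Hgr N₁ N₂ a b,
    w (((N₁ ^ r) ∘ₗ (N₂ ^ s)) x) =
      if r ≤ a ∧ s ≤ b then
        ((-1 : ℝ) ^ (r + s) * ((r.factorial : ℝ) / ((a - r).factorial : ℝ)) *
          ((s.factorial : ℝ) / ((b - s).factorial : ℝ))) •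
          (((N₁ ^ (a - r)) ∘ₗ (N₂ ^ (b - s))) x)
      else 0

/-- A differential on a polarized bigraded Hodge–Lefschetz structure. -/
structure IsDifferential (Hgr : ℤ → ℤ → Submodule ℝ H) (N₁ N₂ : H →ₗ[ℝ] H)
    (ψ : H →ₗ[ℝ] H →ₗ[ℝ] ℝ) (dd : H →ₗ[ℝ] H) : Prop where
  mem : ∀ a b : ℤ, ∀ x ∈ Hgr a b, dd x ∈ Hgr (a - 1) (b - 1)
  sq : ∀ x, dd (dd x) = 0
  commN₁ : dd ∘ₗ N₁ = N₁ ∘ₗ dd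
  commN₂ : dd ∘ₗ N₂ = N₂ ∘ₗ dd
  skew : ∀ x y : H, ψ (dd x) y + ψ x (dd y) = 0

/-- The codifferential `d* = - w⁻¹ ∘ d ∘ w`. -/
def dstar (w winv dd : H →ₗ[ℝ] H) : H →ₗ[ℝ] H := -(winv ∘ₗ dd ∘ₗ w)

/-- The Laplacian `Δ = d d* + d* d`. -/
def lap (w winv dd : H →ₗ[ℝ] H) : H →ₗ[ℝ] H :=
  dd ∘ₗ dstar w winv dd + dstar w winv dd ∘ₗ dd


/-- The cocycles `ker(d : H_{a,b} → H_{a-1,b-1})`. -/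
def Zc (Hgr : ℤ → ℤ → Submodule ℝ H) (dd : H →ₗ[ℝ] H) (a b : ℤ) : Submodule ℝ H :=
  LinearMap.ker dd ⊓ Hgr a b

/-- The coboundaries `d(H_{a+1,b+1})`. -/
def Bc (Hgr : ℤ → ℤ → Submodule ℝ H) (dd : H →ₗ[ℝ] H) (a b : ℤ) : Submodule ℝ H :=
  Submodule.map dd (Hgr (a + 1) (b + 1))

/-- The harmonic elements `ker Δ ∩ H_{a,b}`. -/
def Kc (Hgr : ℤ → ℤ → Submodule ℝ H) (w winv dd : H →ₗ[ℝ] H) (a b : ℤ) : Submodule ℝ H :=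
  LinearMap.ker (lap w winv dd) ⊓ Hgr a b

/-- One-variable Lefschetz structure. -/
structure Lef (G : ℤ → Submodule ℝ H) (N : H →ₗ[ℝ] H) : Prop where
  map : ∀ a : ℤ, ∀ x ∈ G a, N x ∈ G (a - 2)
  surj : ∀ (a : ℕ), ∀ y ∈ G (-(a : ℤ)), ∃ x ∈ G (a : ℤ), (N ^ a) x = y
  inj : ∀ (a : ℕ), ∀ x ∈ G (a : ℤ), (N ^ a) x = 0 → x = 0
  fin : ∃ M : ℕ, ∀ a : ℤ, (M : ℤ) < a → ∀ x ∈ G a, x = 0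

lemma pow_succ_app (N : H →ₗ[ℝ] H) (k : ℕ) (x : H) : (N ^ (k + 1)) x = N ((N ^ k) x) := by
  rw [pow_succ', Module.End.mul_apply]

lemma pow_succ_app' (N : H →ₗ[ℝ] H) (k : ℕ) (x : H) : (N ^ (k + 1)) x = (N ^ k) (N x) := by
  rw [pow_succ, Module.End.mul_apply]

lemma pow_add_app (N : H →ₗ[ℝ] H) (k l : ℕ) (x : H) :
    (N ^ (k + l)) x = (N ^ k) ((N ^ l) x) := by
  rw [pow_add, Module.End.mul_apply]

lemma pow_zero_of_le (N : H →ₗ[ℝ] H) {k l : ℕ} (h : k ≤ l) {x : H} (hx : (N ^ k) x = 0) :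
    (N ^ l) x = 0 := by
  obtain ⟨m, rfl⟩ := Nat.exists_eq_add_of_le h
  rw [add_comm, pow_add_app, hx, map_zero]

lemma Lef.map_pow {G : ℤ → Submodule ℝ H} {N : H →ₗ[ℝ] H} (h : Lef G N) (k : ℕ) :
    ∀ a : ℤ, ∀ x ∈ G a, (N ^ k) x ∈ G (a - 2 * k) := by
  induction k with
  | zero => intro a x hx; simpa using hx
  | succ k ih =>
    intro a x hx
    rw [pow_succ_app]
    have := h.map _ _ (ih a x hx)
    convert this using 2
    push_cast; ring

lemma Lef.dec {G : ℤ → Submodule ℝ H} {N : H →ₗ[ℝ] H} (h : Lef G N) (a : ℕ) (u : H)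
    (hu : u ∈ G ((a : ℤ) - 1)) :
    ∃ y0 ∈ G ((a : ℤ) - 1), ∃ y1 ∈ G ((a : ℤ) + 1), u = y0 + N y1 ∧ (N ^ a) y0 = 0 ∧
      (N ^ (a + 1)) u = (N ^ (a + 2)) y1 := by
  have h1 : (N ^ a) u ∈ G (-((a + 1 : ℕ) : ℤ)) := by
    have := h.map_pow a _ u hu
    convert this using 2
    push_cast; ring
  obtain ⟨y1, hy1, hy⟩ := h.surj (a + 1) _ h1
  have hN : N y1 ∈ G ((a : ℤ) - 1) := by
    have := h.map _ _ hy1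
    convert this using 2
    push_cast; ring
  refine ⟨u - N y1, Submodule.sub_mem _ hu hN, y1, by simpa using hy1, by simp, ?_, ?_⟩
  · rw [map_sub, ← pow_succ_app', hy, sub_self]
  · rw [pow_succ_app N a, ← hy, ← pow_succ_app]

/-- Spanning principle. -/
lemma Lef.span {G : ℤ → Submodule ℝ H} {N : H →ₗ[ℝ] H} (h : Lef G N)
    (S : ℤ → Submodule ℝ H) (hS : ∀ a, ∀ x ∈ S a, N x ∈ S (a - 2))
    (hP : ∀ a : ℕ, ∀ x ∈ G a, (N ^ (a + 1)) x = 0 → x ∈ S a) :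
    ∀ a, ∀ x ∈ G a, x ∈ S a := by
  obtain ⟨M, hM⟩ := h.fin
  have hS' : ∀ k : ℕ, ∀ a, ∀ x ∈ S a, (N ^ k) x ∈ S (a - 2 * k) := by
    intro k
    induction k with
    | zero => intro a x hx; simpa using hx
    | succ k ih =>
      intro a x hx
      rw [pow_succ_app]
      have := hS _ _ (ih a x hx)
      convert this using 2
      push_cast; ring
  have key : ∀ n : ℕ, ∀ c : ℕ, M + 1 ≤ c + n → ∀ x ∈ G c, x ∈ S c := by
    intro n
    induction n with
    | zero =>
      intro c hc x hx
      have := hM c (by omega) x hx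
      rw [this]; exact Submodule.zero_mem _
    | succ n ih =>
      intro c hc x hx
      obtain ⟨y0, hy0, y1, hy1, hxy, h0, -⟩ := h.dec (c + 1) x (by simpa using hx)
      rw [hxy]
      refine Submodule.add_mem _ (hP c y0 (by simpa using hy0) h0) ?_
      have : y1 ∈ S ((c + 2 : ℕ) : ℤ) := ih (c + 2) (by omega) y1 (by
        convert hy1 using 2; push_cast; ring)
      have := hS _ _ this
      convert this using 2
      push_cast; ring
  intro a x hx
  rcases Int.le_total 0 a with ha | ha
  · obtain ⟨c, rfl⟩ := Int.eq_ofNat_of_zero_le ha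
    exact key (M + 1) c (by omega) x hx
  · obtain ⟨c, hc⟩ := Int.eq_ofNat_of_zero_le (show 0 ≤ -a by omega)
    obtain rfl : a = -(c : ℤ) := by omega
    obtain ⟨y, hy, rfl⟩ := h.surj c x hx
    have := hS' c _ y (key (M + 1) c (by omega) y hy)
    convert this using 2
    ring

lemma pow_comm_app {N K : H →ₗ[ℝ] H} (h : N ∘ₗ K = K ∘ₗ N) (r s : ℕ) (x : H) :
    (N ^ r) ((K ^ s) x) = (K ^ s) ((N ^ r) x) := by
  have : Commute N K := h
  have := (this.pow_pow r s).eq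
  exact LinearMap.congr_fun this x

/-- Passing to the kernel of a commuting operator. -/
lemma Lef.ker {G G' : ℤ → Submodule ℝ H} {N K : H →ₗ[ℝ] H} (h : Lef G N) (h' : Lef G' N)
    (hc : ∀ k x, (N ^ k) (K x) = K ((N ^ k) x)) (hK : ∀ a, ∀ x ∈ G a, K x ∈ G' a) :
    Lef (fun a => G a ⊓ LinearMap.ker K) N where
  map := by
    rintro a x ⟨hx, hx'⟩
    refine ⟨h.map a x hx, ?_⟩
    have := hc 1 x
    simp only [pow_one, SetLike.mem_coe, LinearMap.mem_ker] at *
    rw [← this, hx', map_zero]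
  surj := by
    rintro a y ⟨hy, hy'⟩
    obtain ⟨x, hx, rfl⟩ := h.surj a y hy
    refine ⟨x, ⟨hx, ?_⟩, rfl⟩
    simp only [SetLike.mem_coe, LinearMap.mem_ker] at *
    exact h'.inj a _ (hK _ _ hx) (by rw [hc, hy'])
  inj := by
    rintro a x ⟨hx, -⟩
    exact h.inj a x hx
  fin := by
    obtain ⟨M, hM⟩ := h.fin
    exact ⟨M, fun a ha x hx => hM a ha x hx.1⟩

section
variable {Hgr : ℤ → ℤ → Submodule ℝ H} {N₁ N₂ : H →ₗ[ℝ] H}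

lemma IsHL.bdd (h : IsHL Hgr N₁ N₂) :
    ∃ M : ℕ, ∀ a b : ℤ, ((M : ℤ) < a ∨ (M : ℤ) < b) → ∀ x ∈ Hgr a b, x = 0 := by
  have := h.findim
  have hf := WellFoundedGT.finite_ne_bot_of_iSupIndep h.internal.submodule_iSupIndep
  obtain ⟨M, hM⟩ := (hf.image (fun p : ℤ × ℤ => max p.1.natAbs p.2.natAbs)).bddAbove
  refine ⟨M, fun a b hab x hx => ?_⟩
  by_contra hne
  have hm : (a, b) ∈ {i : ℤ × ℤ | Hgr i.1 i.2 ≠ ⊥} := by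
    intro hb
    apply hne
    have : x ∈ (⊥ : Submodule ℝ H) := by rw [← hb]; exact hx
    simpa using this
  have := hM (Set.mem_image_of_mem _ hm)
  simp only [sup_le_iff] at this
  omega

lemma IsHL.lef₁ (h : IsHL Hgr N₁ N₂) (b : ℤ) : Lef (fun a => Hgr a b) N₁ where
  map := fun a x hx => h.mapN₁ a b x hx
  surj := by
    intro a y hy
    have := (h.bijN₁ a b).1
    rw [← this] at hy
    obtain ⟨x, hx, rfl⟩ := hy
    exact ⟨x, hx, rfl⟩
  inj := fun a => (h.bijN₁ a b).2
  fin := by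
    obtain ⟨M, hM⟩ := h.bdd
    exact ⟨M, fun a ha => hM a b (Or.inl ha)⟩

lemma IsHL.lef₂ (h : IsHL Hgr N₁ N₂) (a : ℤ) : Lef (fun b => Hgr a b) N₂ where
  map := fun b x hx => h.mapN₂ a b x hx
  surj := by
    intro b y hy
    have := (h.bijN₂ a b).1
    rw [← this] at hy
    obtain ⟨x, hx, rfl⟩ := hy
    exact ⟨x, hx, rfl⟩
  inj := fun b => (h.bijN₂ a b).2
  fin := by
    obtain ⟨M, hM⟩ := h.bdd
    exact ⟨M, fun b hb => hM a b (Or.inr hb)⟩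

lemma IsHL.lefK₁ (h : IsHL Hgr N₁ N₂) (b : ℤ) (k : ℕ) :
    Lef (fun a => Hgr a b ⊓ LinearMap.ker (N₂ ^ k)) N₁ :=
  (h.lef₁ b).ker (h.lef₁ (b - 2 * k)) (fun r x => pow_comm_app h.comm r k x)
    (fun a x hx => (h.lef₂ a).map_pow k b x hx)

lemma IsHL.lefK₂ (h : IsHL Hgr N₁ N₂) (a : ℤ) (k : ℕ) :
    Lef (fun b => Hgr a b ⊓ LinearMap.ker (N₁ ^ k)) N₂ :=
  (h.lef₂ a).ker (h.lef₂ (a - 2 * k)) (fun r x => pow_comm_app h.comm.symm r k x)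
    (fun b x hx => (h.lef₁ b).map_pow k a x hx)

/-- Shifted primitive part, `Q (a+1) (b+1) = P_{a,b}`, `Q 0 B = Q A 0 = 0`. -/
def Q (Hgr : ℤ → ℤ → Submodule ℝ H) (N₁ N₂ : H →ₗ[ℝ] H) (A B : ℕ) : Submodule ℝ H :=
  Hgr ((A : ℤ) - 1) ((B : ℤ) - 1) ⊓ LinearMap.ker (N₁ ^ A) ⊓ LinearMap.ker (N₂ ^ B)

lemma prim_eq_Q (a b : ℕ) : prim Hgr N₁ N₂ a b = Q Hgr N₁ N₂ (a + 1) (b + 1) := by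
  simp [prim, Q]

lemma mem_Q {A B : ℕ} {x : H} : x ∈ Q Hgr N₁ N₂ A B ↔
    x ∈ Hgr ((A : ℤ) - 1) ((B : ℤ) - 1) ∧ (N₁ ^ A) x = 0 ∧ (N₂ ^ B) x = 0 := by
  simp [Q, and_assoc]

/-- Decomposition of an element killed by one more power. -/
lemma IsHL.dec (h : IsHL Hgr N₁ N₂) (a b : ℕ) (u : H) (hu : u ∈ Hgr ((a : ℤ) - 1) ((b : ℤ) - 1))
    (h1 : (N₁ ^ (a + 1)) u = 0) (h2 : (N₂ ^ (b + 1)) u = 0) :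
    ∃ y00 ∈ Q Hgr N₁ N₂ a b, ∃ y01 ∈ Q Hgr N₁ N₂ a (b + 2),
    ∃ y10 ∈ Q Hgr N₁ N₂ (a + 2) b, ∃ y11 ∈ Q Hgr N₁ N₂ (a + 2) (b + 2),
      u = y00 + N₂ y01 + N₁ y10 + N₁ (N₂ y11) := by
  obtain ⟨y0, ⟨hy0, hy0'⟩, y1, ⟨hy1, hy1'⟩, rfl, h0, e1⟩ :=
    (h.lefK₁ ((b : ℤ) - 1) (b + 1)).dec a u ⟨hu, h2⟩
  rw [h1] at e1
  obtain ⟨y00, ⟨m00, k00⟩, y01, ⟨m01, k01⟩, rfl, l00, e01⟩ :=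
    (h.lefK₂ ((a : ℤ) - 1) a).dec b y0 ⟨hy0, h0⟩
  obtain ⟨y10, ⟨m10, k10⟩, y11, ⟨m11, k11⟩, rfl, l10, e11⟩ :=
    (h.lefK₂ ((a : ℤ) + 1) (a + 2)).dec b y1 ⟨hy1, e1.symm⟩
  simp only [SetLike.mem_coe, LinearMap.mem_ker] at *
  rw [hy0'] at e01
  rw [hy1'] at e11
  have ea : (((a + 2 : ℕ) : ℤ) - 1) = a + 1 := by push_cast; ring
  have eb : (((b + 2 : ℕ) : ℤ) - 1) = b + 1 := by push_cast; ring
  refine ⟨y00, mem_Q.2 ⟨m00, k00, l00⟩, y01, mem_Q.2 ⟨?_, k01, e01.symm⟩,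
    y10, mem_Q.2 ⟨?_, k10, l10⟩, y11, mem_Q.2 ⟨?_, k11, e11.symm⟩, ?_⟩
  · rw [eb]; exact m01
  · rw [ea]; exact m10
  · rw [ea, eb]; exact m11
  · simp only [map_add]; abel

/-- graded spanning -/
lemma IsHL.span (h : IsHL Hgr N₁ N₂) (a b : ℤ) :
    Hgr a b ≤ Submodule.span ℝ {z | ∃ a' b' r s : ℕ, ∃ p ∈ prim Hgr N₁ N₂ a' b',
      (a' : ℤ) - 2 * r = a ∧ (b' : ℤ) - 2 * s = b ∧ z = (N₁ ^ r) ((N₂ ^ s) p)} := by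
  set S : ℤ → ℤ → Submodule ℝ H := fun a b =>
    Submodule.span ℝ {z | ∃ a' b' r s : ℕ, ∃ p ∈ prim Hgr N₁ N₂ a' b',
      (a' : ℤ) - 2 * r = a ∧ (b' : ℤ) - 2 * s = b ∧ z = (N₁ ^ r) ((N₂ ^ s) p)} with hSdef
  have hS1 : ∀ a b, ∀ x ∈ S a b, N₁ x ∈ S (a - 2) b := by
    intro a b
    change S a b ≤ (S (a - 2) b).comap N₁
    refine Submodule.span_le.2 ?_
    rintro z ⟨a', b', r, s, p, hp, e1, e2, rfl⟩
    refine Submodule.subset_span ⟨a', b', r + 1, s, p, hp, ?_, e2, ?_⟩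
    · push_cast; omega
    · rw [pow_succ_app]
  have hS2 : ∀ a b, ∀ x ∈ S a b, N₂ x ∈ S a (b - 2) := by
    intro a b
    change S a b ≤ (S a (b - 2)).comap N₂
    refine Submodule.span_le.2 ?_
    rintro z ⟨a', b', r, s, p, hp, e1, e2, rfl⟩
    refine Submodule.subset_span ⟨a', b', r, s + 1, p, hp, e1, ?_, ?_⟩
    · push_cast; omega
    · rw [pow_succ_app]
      have := pow_comm_app h.comm r 1 ((N₂ ^ s) p)
      simpa using this.symm
  have step : ∀ b : ℕ, ∀ a, ∀ x ∈ Hgr a b ⊓ LinearMap.ker (N₂ ^ (b + 1)), x ∈ S a b := by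
    intro b
    refine (h.lefK₁ b (b + 1)).span (fun a => S a b) (fun a x hx => hS1 a b x hx) ?_
    rintro a x ⟨hx, hx'⟩ hk
    refine Submodule.subset_span ⟨a, b, 0, 0, x, ⟨⟨hx, hk⟩, hx'⟩, by simp, by simp, by simp⟩
  exact (h.lef₂ a).span (fun b => S a b) (fun b x hx => hS2 a b x hx)
    (fun b x hx hk => step b a x ⟨hx, hk⟩) b

lemma IsHL.span_top (h : IsHL Hgr N₁ N₂) (S : Submodule ℝ H)
    (hS : ∀ a b r s : ℕ, ∀ p ∈ prim Hgr N₁ N₂ a b, (N₁ ^ r) ((N₂ ^ s) p) ∈ S) : S = ⊤ := by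
  rw [eq_top_iff, ← h.internal.submodule_iSup_eq_top]
  refine iSup_le fun p => (h.span p.1 p.2).trans (Submodule.span_le.2 ?_)
  rintro z ⟨a', b', r, s, p, hp, -, -, rfl⟩
  exact hS _ _ _ _ _ hp

lemma IsHL.ext (h : IsHL Hgr N₁ N₂) (f g : H →ₗ[ℝ] H)
    (hfg : ∀ a b r s : ℕ, ∀ p ∈ prim Hgr N₁ N₂ a b,
      f ((N₁ ^ r) ((N₂ ^ s) p)) = g ((N₁ ^ r) ((N₂ ^ s) p))) : f = g := by
  have := h.span_top (LinearMap.eqLocus f g) hfg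
  ext x
  have hx : x ∈ LinearMap.eqLocus f g := this ▸ Submodule.mem_top
  exact hx

lemma Q_zero (h : IsHL Hgr N₁ N₂) {A B r s : ℕ} {y : H} (hy : y ∈ Q Hgr N₁ N₂ A B)
    (hrs : A ≤ r ∨ B ≤ s) : (N₁ ^ r) ((N₂ ^ s) y) = 0 := by
  obtain ⟨-, h1, h2⟩ := mem_Q.1 hy
  rcases hrs with hr | hs
  · rw [pow_comm_app h.comm, pow_zero_of_le N₁ hr h1, map_zero]
  · rw [pow_zero_of_le N₂ hs h2, map_zero]

variable {w winv : H →ₗ[ℝ] H}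

lemma IsW.app (hw : IsW Hgr N₁ N₂ w) {A B r r' s s' : ℕ} (hr : r + r' + 1 = A)
    (hs : s + s' + 1 = B) {y : H} (hy : y ∈ Q Hgr N₁ N₂ A B) :
    w ((N₁ ^ r) ((N₂ ^ s) y)) = (((-1 : ℝ) ^ r * ((r.factorial : ℝ) / (r'.factorial : ℝ))) *
      ((-1 : ℝ) ^ s * ((s.factorial : ℝ) / (s'.factorial : ℝ)))) • (N₁ ^ r') ((N₂ ^ s') y) := by
  subst hr hs
  rw [← prim_eq_Q] at hy
  have := hw _ _ r s y hy
  rw [if_pos ⟨by omega, by omega⟩, show r + r' - r = r' by omega,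
    show s + s' - s = s' by omega] at this
  simp only [LinearMap.comp_apply] at this
  rw [this]
  congr 1
  ring

lemma coef_ne (r r' s s' : ℕ) : (((-1 : ℝ) ^ r * ((r.factorial : ℝ) / (r'.factorial : ℝ))) *
      ((-1 : ℝ) ^ s * ((s.factorial : ℝ) / (s'.factorial : ℝ)))) ≠ 0 := by
  positivity

lemma IsW.inv_app (hw : IsW Hgr N₁ N₂ w) (hi : winv ∘ₗ w = LinearMap.id) {A B r r' s s' : ℕ}
    (hr : r + r' + 1 = A)
    (hs : s + s' + 1 = B) {y : H} (hy : y ∈ Q Hgr N₁ N₂ A B) :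
    winv ((N₁ ^ r') ((N₂ ^ s') y)) =
      (((-1 : ℝ) ^ r * ((r.factorial : ℝ) / (r'.factorial : ℝ))) *
      ((-1 : ℝ) ^ s * ((s.factorial : ℝ) / (s'.factorial : ℝ))))⁻¹ • (N₁ ^ r) ((N₂ ^ s) y) := by
  have h1 := congrArg winv (hw.app hr hs hy)
  rw [map_smul] at h1
  have h2 : winv (w ((N₁ ^ r) ((N₂ ^ s) y))) = (N₁ ^ r) ((N₂ ^ s) y) :=
    LinearMap.congr_fun hi _
  rw [h2] at h1
  rw [h1, smul_smul, inv_mul_cancel₀ (coef_ne _ _ _ _), one_smul]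

/-- raising operator -/
def Lop (w winv N : H →ₗ[ℝ] H) : H →ₗ[ℝ] H := -(w ∘ₗ N ∘ₗ winv)

lemma L₁_app (h : IsHL Hgr N₁ N₂) (hw : IsW Hgr N₁ N₂ w) (hi : winv ∘ₗ w = LinearMap.id)
    {A B : ℕ} {y : H} (hy : y ∈ Q Hgr N₁ N₂ A B) (r s : ℕ) :
    Lop w winv N₁ ((N₁ ^ r) ((N₂ ^ s) y)) =
      ((r : ℝ) * ((A : ℝ) - r)) • (N₁ ^ (r - 1)) ((N₂ ^ s) y) := by
  by_cases hs : B ≤ s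
  · rw [Q_zero h hy (Or.inr hs), Q_zero h hy (Or.inr hs)]; simp
  by_cases hr : A ≤ r
  · rw [Q_zero h hy (Or.inl hr), map_zero]
    rcases hr.eq_or_lt with rfl | hr
    · simp
    · rw [Q_zero h hy (Or.inl (by omega)), smul_zero]
  obtain ⟨m, rfl⟩ := Nat.exists_eq_add_of_lt (not_le.1 hr)
  obtain ⟨n, rfl⟩ := Nat.exists_eq_add_of_lt (not_le.1 hs)
  rw [Lop, LinearMap.neg_apply, LinearMap.comp_apply, LinearMap.comp_apply,
    hw.inv_app hi (r := m) (r' := r) (s := n) (s' := s) (by omega) (by omega) hy, map_smul,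
    map_smul, ← pow_succ_app]
  rcases r with _ | r
  · rw [Q_zero h hy (Or.inl (by omega))]; simp
  rw [hw.app (r := m + 1) (r' := r) (s := n) (s' := s) (by omega) (by omega) hy, smul_smul,
    ← neg_smul]
  congr 1
  have f1 : (m.factorial : ℝ) ≠ 0 := by positivity
  have f2 : (n.factorial : ℝ) ≠ 0 := by positivity
  have f3 : (r.factorial : ℝ) ≠ 0 := by positivity
  have f4 : (s.factorial : ℝ) ≠ 0 := by positivity
  rw [Nat.factorial_succ m, Nat.factorial_succ r]
  push_cast
  have e1 : ((-1 : ℝ)) ^ m ≠ 0 := by positivity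
  have e2 : ((-1 : ℝ)) ^ n ≠ 0 := by positivity
  rw [pow_succ]
  field_simp
  ring

lemma L₂_app (h : IsHL Hgr N₁ N₂) (hw : IsW Hgr N₁ N₂ w) (hi : winv ∘ₗ w = LinearMap.id)
    {A B : ℕ} {y : H} (hy : y ∈ Q Hgr N₁ N₂ A B) (r s : ℕ) :
    Lop w winv N₂ ((N₁ ^ r) ((N₂ ^ s) y)) =
      ((s : ℝ) * ((B : ℝ) - s)) • (N₁ ^ r) ((N₂ ^ (s - 1)) y) := by
  by_cases hr : A ≤ r
  · rw [Q_zero h hy (Or.inl hr), Q_zero h hy (Or.inl hr)]; simp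
  by_cases hs : B ≤ s
  · rw [Q_zero h hy (Or.inr hs), map_zero]
    rcases hs.eq_or_lt with rfl | hs
    · simp
    · rw [Q_zero h hy (Or.inr (by omega)), smul_zero]
  obtain ⟨m, rfl⟩ := Nat.exists_eq_add_of_lt (not_le.1 hr)
  obtain ⟨n, rfl⟩ := Nat.exists_eq_add_of_lt (not_le.1 hs)
  have hc : ∀ z, N₂ ((N₁ ^ m) z) = (N₁ ^ m) (N₂ z) := fun z => by
    simpa using (pow_comm_app h.comm m 1 z).symm
  rw [Lop, LinearMap.neg_apply, LinearMap.comp_apply, LinearMap.comp_apply,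
    hw.inv_app hi (r := m) (r' := r) (s := n) (s' := s) (by omega) (by omega) hy, map_smul,
    map_smul, hc, ← pow_succ_app]
  rcases s with _ | s
  · rw [Q_zero h hy (Or.inr (by omega))]; simp
  rw [hw.app (r := m) (r' := r) (s := n + 1) (s' := s) (by omega) (by omega) hy, smul_smul,
    ← neg_smul]
  congr 1
  have f1 : (m.factorial : ℝ) ≠ 0 := by positivity
  have f2 : (n.factorial : ℝ) ≠ 0 := by positivity
  have f3 : (r.factorial : ℝ) ≠ 0 := by positivity
  have f4 : (s.factorial : ℝ) ≠ 0 := by positivity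
  rw [Nat.factorial_succ n, Nat.factorial_succ s]
  push_cast
  have e1 : ((-1 : ℝ)) ^ m ≠ 0 := by positivity
  have e2 : ((-1 : ℝ)) ^ n ≠ 0 := by positivity
  rw [pow_succ]
  field_simp
  ring

/-- one-variable coefficient relation -/
def Rel (A : ℕ) (g : ℝ) (m : ℕ) (k : ℝ) (n : ℕ) : Prop :=
  (g = 0 ∧ A ≤ n) ∨
    (m + n + 1 = A ∧ g * ((-1 : ℝ) ^ m * ((m.factorial : ℝ) / (n.factorial : ℝ))) = k)

lemma Rel.app (h : IsHL Hgr N₁ N₂) (hw : IsW Hgr N₁ N₂ w) {A B : ℕ} {y : H}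
    (hy : y ∈ Q Hgr N₁ N₂ A B) {g g' k k' : ℝ} {m n m' n' : ℕ} (h1 : Rel A g m k n)
    (h2 : Rel B g' m' k' n') :
    w ((g * g') • (N₁ ^ m) ((N₂ ^ m') y)) = (k * k') • (N₁ ^ n) ((N₂ ^ n') y) := by
  rcases h1 with ⟨rfl, h1⟩ | ⟨h1, rfl⟩
  · rw [Q_zero h hy (Or.inl h1)]; simp
  rcases h2 with ⟨rfl, h2⟩ | ⟨h2, rfl⟩
  · rw [Q_zero h hy (Or.inr h2)]; simp
  rw [map_smul, hw.app h1 h2 hy, smul_smul]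
  congr 1
  ring

lemma rel0 (r r' : ℕ) : Rel (r + r') (-(r : ℝ)) (r - 1)
    ((-1 : ℝ) ^ r * ((r.factorial : ℝ) / (r'.factorial : ℝ))) r' := by
  rcases r with _ | r
  · left; simp
  · right
    refine ⟨by omega, ?_⟩
    rw [Nat.factorial_succ, Nat.add_sub_cancel]
    push_cast
    ring

lemma rel1 (r r' : ℕ) : Rel (r + r' + 2) ((r' : ℝ) + 1) r
    ((-1 : ℝ) ^ r * ((r.factorial : ℝ) / (r'.factorial : ℝ))) (r' + 1) := by
  right
  refine ⟨by omega, ?_⟩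
  have f1 : (r'.factorial : ℝ) ≠ 0 := by positivity
  rw [Nat.factorial_succ]
  push_cast
  field_simp

variable {ψ : H →ₗ[ℝ] H →ₗ[ℝ] ℝ} {dd : H →ₗ[ℝ] H}

lemma d_pow (hd : IsDifferential Hgr N₁ N₂ ψ dd) (r s : ℕ) (x : H) :
    dd ((N₁ ^ r) ((N₂ ^ s) x)) = (N₁ ^ r) ((N₂ ^ s) (dd x)) := by
  have h1 := pow_comm_app hd.commN₁ 1 r
  have h2 := pow_comm_app hd.commN₂ 1 s
  simp only [pow_one] at h1 h2
  rw [h1, h2]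

/-- `E = [L₂,[L₁,d]]` -/
def Eop (L₁ L₂ d : Module.End ℝ H) : Module.End ℝ H :=
  L₂ * (L₁ * d - d * L₁) - (L₁ * d - d * L₁) * L₂

lemma wE (h : IsHL Hgr N₁ N₂) (hw : IsW Hgr N₁ N₂ w) (hi : winv ∘ₗ w = LinearMap.id)
    (hd : IsDifferential Hgr N₁ N₂ ψ dd) :
    w ∘ₗ Eop (Lop w winv N₁) (Lop w winv N₂) dd = dd ∘ₗ w := by
  refine h.ext _ _ ?_
  intro a b r s x hx
  rw [prim_eq_Q] at hx
  by_cases hrs : a + 1 ≤ r ∨ b + 1 ≤ s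
  · rw [Q_zero h hx hrs]; simp
  push Not at hrs
  obtain ⟨r', rfl⟩ := Nat.exists_eq_add_of_le (Nat.lt_succ_iff.1 hrs.1)
  obtain ⟨s', rfl⟩ := Nat.exists_eq_add_of_le (Nat.lt_succ_iff.1 hrs.2)
  obtain ⟨hx0, hx1, hx2⟩ := mem_Q.1 hx
  have c1 := d_pow hd (r + r' + 1) 0 x
  have c2 := d_pow hd 0 (s + s' + 1) x
  simp only [pow_zero, Module.End.one_apply] at c1 c2
  obtain ⟨y00, m00, y01, m01, y10, m10, y11, m11, e⟩ := h.dec (r + r') (s + s') (dd x)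
    (by have := hd.mem _ _ x hx0; convert this using 2 <;> push_cast <;> ring)
    (by rw [← c1, hx1, map_zero]) (by rw [← c2, hx2, map_zero])
  have key : ∀ i j : ℕ, dd ((N₁ ^ i) ((N₂ ^ j) x)) = (N₁ ^ i) ((N₂ ^ j) y00) +
      (N₁ ^ i) ((N₂ ^ (j + 1)) y01) + (N₁ ^ (i + 1)) ((N₂ ^ j) y10) +
      (N₁ ^ (i + 1)) ((N₂ ^ (j + 1)) y11) := by
    intro i j
    have hc := fun z => pow_comm_app h.comm.symm j 1 z
    simp only [pow_one] at hc
    rw [d_pow hd, e]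
    simp only [map_add, pow_succ_app', hc]
  have hE : Eop (Lop w winv N₁) (Lop w winv N₂) dd ((N₁ ^ r) ((N₂ ^ s) x)) =
      ((-(r : ℝ)) * (-(s : ℝ))) • (N₁ ^ (r - 1)) ((N₂ ^ (s - 1)) y00) +
      ((-(r : ℝ)) * ((s' : ℝ) + 1)) • (N₁ ^ (r - 1)) ((N₂ ^ s) y01) +
      (((r' : ℝ) + 1) * (-(s : ℝ))) • (N₁ ^ r) ((N₂ ^ (s - 1)) y10) +
      (((r' : ℝ) + 1) * ((s' : ℝ) + 1)) • (N₁ ^ r) ((N₂ ^ s) y11) := by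
    have X1 := L₁_app h hw hi hx
    have X2 := L₂_app h hw hi hx
    have a00 := L₁_app h hw hi m00
    have b00 := L₂_app h hw hi m00
    have a01 := L₁_app h hw hi m01
    have b01 := L₂_app h hw hi m01
    have a10 := L₁_app h hw hi m10
    have b10 := L₂_app h hw hi m10
    have a11 := L₁_app h hw hi m11
    have b11 := L₂_app h hw hi m11
    rcases r with _ | r <;> rcases s with _ | s <;>
    · simp only [Eop, LinearMap.sub_apply, Module.End.mul_apply, X1, X2, map_smul, map_sub,
        key, map_add, a00, b00, a01, b01, a10, b10, a11, b11, Nat.add_sub_cancel, Nat.zero_sub,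
        Nat.zero_add]
      push_cast
      module
  rw [LinearMap.comp_apply, LinearMap.comp_apply, hE,
    hw.app (r := r) (r' := r') (s := s) (s' := s') (by omega) (by omega) hx, map_smul, key]
  simp only [map_add]
  rw [Rel.app h hw m00 (rel0 r r') (rel0 s s'), Rel.app h hw m01 (rel0 r r') (rel1 s s'),
    Rel.app h hw m10 (rel1 r r') (rel0 s s'), Rel.app h hw m11 (rel1 r r') (rel1 s s')]
  simp only [smul_add]

lemma dstar_eq (h : IsHL Hgr N₁ N₂) (hw : IsW Hgr N₁ N₂ w) (hi : winv ∘ₗ w = LinearMap.id)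
    (hd : IsDifferential Hgr N₁ N₂ ψ dd) :
    dstar w winv dd = - Eop (Lop w winv N₁) (Lop w winv N₂) dd := by
  rw [dstar, ← wE h hw hi hd, ← LinearMap.comp_assoc, hi, LinearMap.id_comp]

lemma alg_comm {R : Type*} [Ring R] (N L L' d : R) (hdd : d * d = 0) (hN : N * d = d * N)
    (hL : N * L' = L' * N)
    (hc : N * (L * d - d * L) - (L * d - d * L) * N = d) :
    N * (d * (L' * (L * d - d * L) - (L * d - d * L) * L') +
      (L' * (L * d - d * L) - (L * d - d * L) * L') * d) =
    (d * (L' * (L * d - d * L) - (L * d - d * L) * L') +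
      (L' * (L * d - d * L) - (L * d - d * L) * L') * d) * N := by
  set e := L * d - d * L with he
  have h1 : N * e = e * N + d := by rw [← hc]; abel
  have h2 : N * (L' * e - e * L') = (L' * e - e * L') * N + (L' * d - d * L') := by
    calc N * (L' * e - e * L') = (N * L') * e - (N * e) * L' := by noncomm_ring
      _ = L' * (N * e) - (N * e) * L' := by rw [hL]; noncomm_ring
      _ = L' * e * N + L' * d - (e * (N * L') + d * L') := by rw [h1]; noncomm_ring
      _ = _ := by rw [hL]; noncomm_ring
  set E := L' * e - e * L' with hE
  calc N * (d * E + E * d) = (N * d) * E + (N * E) * d := by noncomm_ring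
    _ = d * (N * E) + (N * E) * d := by rw [hN]; noncomm_ring
    _ = d * E * N + d * (L' * d - d * L') + (E * (N * d) + (L' * d - d * L') * d) := by
      rw [h2]; noncomm_ring
    _ = (d * E + E * d) * N + (L' * (d * d) - (d * d) * L') := by rw [hN]; noncomm_ring
    _ = _ := by rw [hdd]; simp

lemma mem_cast {a b a' b' : ℤ} {x : H} (hx : x ∈ Hgr a b) (ha : a = a') (hb : b = b') :
    x ∈ Hgr a' b' := by
  subst ha hb; exact hx

lemma IsHL.ext' (h : IsHL Hgr N₁ N₂) (f g : H →ₗ[ℝ] H)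
    (hfg : ∀ a b : ℤ, ∀ x ∈ Hgr a b, f x = g x) : f = g := by
  have : LinearMap.eqLocus f g = ⊤ := by
    rw [eq_top_iff, ← h.internal.submodule_iSup_eq_top]
    exact iSup_le fun p x hx => hfg _ _ x hx
  ext x
  have hx : x ∈ LinearMap.eqLocus f g := this ▸ Submodule.mem_top
  exact hx

lemma IsHL.ext_gr (h : IsHL Hgr N₁ N₂) (f g : H →ₗ[ℝ] H) (a b : ℤ)
    (hfg : ∀ a' b' r s : ℕ, ∀ p ∈ prim Hgr N₁ N₂ a' b',
      (a' : ℤ) - 2 * r = a → (b' : ℤ) - 2 * s = b →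
      f ((N₁ ^ r) ((N₂ ^ s) p)) = g ((N₁ ^ r) ((N₂ ^ s) p))) : ∀ x ∈ Hgr a b, f x = g x := by
  have : Hgr a b ≤ LinearMap.eqLocus f g := by
    refine (h.span a b).trans (Submodule.span_le.2 ?_)
    rintro z ⟨a', b', r, s, p, hp, e1, e2, rfl⟩
    exact hfg _ _ _ _ p hp e1 e2
  exact fun x hx => this hx

lemma h₁_app (h : IsHL Hgr N₁ N₂) (hw : IsW Hgr N₁ N₂ w) (hi : winv ∘ₗ w = LinearMap.id)
    (a b : ℤ) (x : H) (hx : x ∈ Hgr a b) :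
    Lop w winv N₁ (N₁ x) - N₁ (Lop w winv N₁ x) = (a : ℝ) • x := by
  refine h.ext_gr (Lop w winv N₁ ∘ₗ N₁ - N₁ ∘ₗ Lop w winv N₁) ((a : ℝ) • LinearMap.id) a b
    ?_ x hx
  intro a' b' r s p hp e1 e2
  rw [prim_eq_Q] at hp
  simp only [LinearMap.sub_apply, LinearMap.comp_apply, LinearMap.smul_apply, LinearMap.id_apply]
  rw [← pow_succ_app, L₁_app h hw hi hp, L₁_app h hw hi hp, ← e1]
  rcases r with _ | r
  · push_cast; simp
  · rw [map_smul, Nat.add_sub_cancel, Nat.add_sub_cancel, ← pow_succ_app]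
    push_cast; module

lemma h₂_app (h : IsHL Hgr N₁ N₂) (hw : IsW Hgr N₁ N₂ w) (hi : winv ∘ₗ w = LinearMap.id)
    (a b : ℤ) (x : H) (hx : x ∈ Hgr a b) :
    Lop w winv N₂ (N₂ x) - N₂ (Lop w winv N₂ x) = (b : ℝ) • x := by
  refine h.ext_gr (Lop w winv N₂ ∘ₗ N₂ - N₂ ∘ₗ Lop w winv N₂) ((b : ℝ) • LinearMap.id) a b
    ?_ x hx
  intro a' b' r s p hp e1 e2
  rw [prim_eq_Q] at hp
  have hc : ∀ r z, N₂ ((N₁ ^ r) z) = (N₁ ^ r) (N₂ z) := fun r z => by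
    simpa using (pow_comm_app h.comm r 1 z).symm
  simp only [LinearMap.sub_apply, LinearMap.comp_apply, LinearMap.smul_apply, LinearMap.id_apply]
  rw [hc, ← pow_succ_app, L₂_app h hw hi hp, L₂_app h hw hi hp, ← e2]
  rcases s with _ | s
  · push_cast; simp
  · rw [map_smul, Nat.add_sub_cancel, Nat.add_sub_cancel, hc, ← pow_succ_app]
    push_cast; module

lemma comm_N₁L₂ (h : IsHL Hgr N₁ N₂) (hw : IsW Hgr N₁ N₂ w) (hi : winv ∘ₗ w = LinearMap.id) :
    N₁ ∘ₗ Lop w winv N₂ = Lop w winv N₂ ∘ₗ N₁ := by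
  refine h.ext _ _ ?_
  intro a b r s p hp
  rw [prim_eq_Q] at hp
  simp only [LinearMap.comp_apply]
  rw [← pow_succ_app, L₂_app h hw hi hp, L₂_app h hw hi hp, map_smul, ← pow_succ_app]

lemma comm_N₂L₁ (h : IsHL Hgr N₁ N₂) (hw : IsW Hgr N₁ N₂ w) (hi : winv ∘ₗ w = LinearMap.id) :
    N₂ ∘ₗ Lop w winv N₁ = Lop w winv N₁ ∘ₗ N₂ := by
  refine h.ext _ _ ?_
  intro a b r s p hp
  rw [prim_eq_Q] at hp
  have hc : ∀ r z, N₂ ((N₁ ^ r) z) = (N₁ ^ r) (N₂ z) := fun r z => by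
    simpa using (pow_comm_app h.comm r 1 z).symm
  simp only [LinearMap.comp_apply]
  rw [hc, ← pow_succ_app, L₁_app h hw hi hp, L₁_app h hw hi hp, map_smul, hc, ← pow_succ_app]

lemma comm_LL (h : IsHL Hgr N₁ N₂) (hi : winv ∘ₗ w = LinearMap.id) :
    Lop w winv N₁ ∘ₗ Lop w winv N₂ = Lop w winv N₂ ∘ₗ Lop w winv N₁ := by
  have hi' : ∀ x, winv (w x) = x := fun x => LinearMap.congr_fun hi x
  have hc : ∀ x, N₁ (N₂ x) = N₂ (N₁ x) := fun x => LinearMap.congr_fun h.comm x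
  ext x
  simp [Lop, hi', hc]

lemma lap_comm₁ (h : IsHL Hgr N₁ N₂) (hw : IsW Hgr N₁ N₂ w) (hi : winv ∘ₗ w = LinearMap.id)
    (hd : IsDifferential Hgr N₁ N₂ ψ dd) (x : H) :
    lap w winv dd (N₁ x) = N₁ (lap w winv dd x) := by
  have hdN : ∀ x, dd (N₁ x) = N₁ (dd x) := fun x => LinearMap.congr_fun hd.commN₁ x
  have key := alg_comm (R := Module.End ℝ H) N₁ (Lop w winv N₁) (Lop w winv N₂) dd
    (by ext x; exact hd.sq x) hd.commN₁.symm (comm_N₁L₂ h hw hi) (by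
      refine h.ext' _ _ ?_
      intro a b x hx
      have e1 := h₁_app h hw hi a b x hx
      have e2 := h₁_app h hw hi _ _ _ (hd.mem a b x hx)
      have e3 := congrArg dd e1
      simp only [map_sub, map_smul, hdN] at e3
      simp only [LinearMap.sub_apply, Module.End.mul_apply, map_sub, hdN]
      calc _ = (dd (Lop w winv N₁ (N₁ x)) - N₁ (dd (Lop w winv N₁ x))) -
            (Lop w winv N₁ (N₁ (dd x)) - N₁ (Lop w winv N₁ (dd x))) := by abel
        _ = dd x := by rw [e2, e3]; push_cast; module)
  have := LinearMap.congr_fun key x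
  rw [lap, dstar_eq h hw hi hd, Eop]
  simp only [LinearMap.add_apply, LinearMap.comp_apply, LinearMap.neg_apply, map_neg,
    Module.End.mul_apply, map_add] at this ⊢
  rw [← neg_add, ← neg_add, ← this]

lemma lap_comm₂ (h : IsHL Hgr N₁ N₂) (hw : IsW Hgr N₁ N₂ w) (hi : winv ∘ₗ w = LinearMap.id)
    (hd : IsDifferential Hgr N₁ N₂ ψ dd) (x : H) :
    lap w winv dd (N₂ x) = N₂ (lap w winv dd x) := by
  have hdN : ∀ x, dd (N₂ x) = N₂ (dd x) := fun x => LinearMap.congr_fun hd.commN₂ x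
  have key := alg_comm (R := Module.End ℝ H) N₂ (Lop w winv N₂) (Lop w winv N₁) dd
    (by ext x; exact hd.sq x) hd.commN₂.symm (comm_N₂L₁ h hw hi) (by
      refine h.ext' _ _ ?_
      intro a b x hx
      have e1 := h₂_app h hw hi a b x hx
      have e2 := h₂_app h hw hi _ _ _ (hd.mem a b x hx)
      have e3 := congrArg dd e1
      simp only [map_sub, map_smul, hdN] at e3
      simp only [LinearMap.sub_apply, Module.End.mul_apply, map_sub, hdN]
      calc _ = (dd (Lop w winv N₂ (N₂ x)) - N₂ (dd (Lop w winv N₂ x))) -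
            (Lop w winv N₂ (N₂ (dd x)) - N₂ (Lop w winv N₂ (dd x))) := by abel
        _ = dd x := by rw [e2, e3]; push_cast; module)
  have hLL : Lop w winv N₁ * Lop w winv N₂ = Lop w winv N₂ * Lop w winv N₁ := comm_LL h hi
  have hEE : Eop (Lop w winv N₂) (Lop w winv N₁) dd = Eop (Lop w winv N₁) (Lop w winv N₂) dd := by
    rw [Eop, Eop]
    calc _ = (Lop w winv N₁ * Lop w winv N₂) * dd - Lop w winv N₁ * dd * Lop w winv N₂
          - Lop w winv N₂ * dd * Lop w winv N₁ + dd * (Lop w winv N₂ * Lop w winv N₁) := by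
          noncomm_ring
      _ = (Lop w winv N₂ * Lop w winv N₁) * dd - Lop w winv N₁ * dd * Lop w winv N₂
          - Lop w winv N₂ * dd * Lop w winv N₁ + dd * (Lop w winv N₁ * Lop w winv N₂) := by
          rw [hLL]
      _ = _ := by noncomm_ring
  have := LinearMap.congr_fun key x
  rw [lap, dstar_eq h hw hi hd, ← hEE, Eop]
  simp only [LinearMap.add_apply, LinearMap.comp_apply, LinearMap.neg_apply, map_neg,
    Module.End.mul_apply, map_add] at this ⊢
  rw [← neg_add, ← neg_add, ← this]

/-! degrees -/

lemma gen_mem (h : IsHL Hgr N₁ N₂) {A B : ℕ} {y : H} (hy : y ∈ Q Hgr N₁ N₂ A B) (r s : ℕ) :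
    (N₁ ^ r) ((N₂ ^ s) y) ∈ Hgr ((A : ℤ) - 1 - 2 * r) ((B : ℤ) - 1 - 2 * s) :=
  (h.lef₁ _).map_pow r _ _ ((h.lef₂ _).map_pow s _ _ (mem_Q.1 hy).1)

lemma w_mem (h : IsHL Hgr N₁ N₂) (hw : IsW Hgr N₁ N₂ w) (a b : ℤ) :
    ∀ x ∈ Hgr a b, w x ∈ Hgr (-a) (-b) := by
  have : Hgr a b ≤ (Hgr (-a) (-b)).comap w := by
    refine (h.span a b).trans (Submodule.span_le.2 ?_)
    rintro z ⟨a', b', r, s, p, hp, e1, e2, rfl⟩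
    rw [prim_eq_Q] at hp
    change w _ ∈ Hgr (-a) (-b)
    by_cases hrs : a' + 1 ≤ r ∨ b' + 1 ≤ s
    · rw [Q_zero h hp hrs, map_zero]; exact Submodule.zero_mem _
    push Not at hrs
    obtain ⟨r', rfl⟩ := Nat.exists_eq_add_of_le (Nat.lt_succ_iff.1 hrs.1)
    obtain ⟨s', rfl⟩ := Nat.exists_eq_add_of_le (Nat.lt_succ_iff.1 hrs.2)
    rw [hw.app (r := r) (r' := r') (s := s) (s' := s') (by omega) (by omega) hp]
    refine Submodule.smul_mem _ _ ?_
    have := gen_mem h hp r' s'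
    exact mem_cast this (by push_cast at *; omega) (by push_cast at *; omega)
  exact fun x hx => this hx

lemma winv_mem (h : IsHL Hgr N₁ N₂) (hw : IsW Hgr N₁ N₂ w) (hi : winv ∘ₗ w = LinearMap.id)
    (a b : ℤ) :
    ∀ x ∈ Hgr a b, winv x ∈ Hgr (-a) (-b) := by
  have : Hgr a b ≤ (Hgr (-a) (-b)).comap winv := by
    refine (h.span a b).trans (Submodule.span_le.2 ?_)
    rintro z ⟨a', b', r, s, p, hp, e1, e2, rfl⟩
    rw [prim_eq_Q] at hp
    change winv _ ∈ Hgr (-a) (-b)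
    by_cases hrs : a' + 1 ≤ r ∨ b' + 1 ≤ s
    · rw [Q_zero h hp hrs, map_zero]; exact Submodule.zero_mem _
    push Not at hrs
    obtain ⟨r', rfl⟩ := Nat.exists_eq_add_of_le (Nat.lt_succ_iff.1 hrs.1)
    obtain ⟨s', rfl⟩ := Nat.exists_eq_add_of_le (Nat.lt_succ_iff.1 hrs.2)
    rw [hw.inv_app hi (r := r') (r' := r) (s := s') (s' := s) (by omega) (by omega) hp]
    refine Submodule.smul_mem _ _ ?_
    have := gen_mem h hp r' s'
    exact mem_cast this (by push_cast at *; omega) (by push_cast at *; omega)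
  exact fun x hx => this hx

lemma dstar_mem (h : IsHL Hgr N₁ N₂) (hw : IsW Hgr N₁ N₂ w) (hi : winv ∘ₗ w = LinearMap.id)
    (hd : IsDifferential Hgr N₁ N₂ ψ dd) (a b : ℤ) (x : H) (hx : x ∈ Hgr a b) :
    dstar w winv dd x ∈ Hgr (a + 1) (b + 1) := by
  have := winv_mem h hw hi _ _ _ (hd.mem _ _ _ (w_mem h hw a b x hx))
  rw [dstar, LinearMap.neg_apply]
  refine Submodule.neg_mem _ ?_
  exact mem_cast this (by ring) (by ring)

lemma lap_mem (h : IsHL Hgr N₁ N₂) (hw : IsW Hgr N₁ N₂ w) (hi : winv ∘ₗ w = LinearMap.id)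
    (hd : IsDifferential Hgr N₁ N₂ ψ dd) (a b : ℤ) (x : H) (hx : x ∈ Hgr a b) :
    lap w winv dd x ∈ Hgr a b := by
  have h1 := hd.mem _ _ _ (dstar_mem h hw hi hd a b x hx)
  have h2 := dstar_mem h hw hi hd _ _ _ (hd.mem a b x hx)
  refine Submodule.add_mem _ ?_ ?_
  · exact mem_cast h1 (by ring) (by ring)
  · exact mem_cast h2 (by ring) (by ring)

/-! positivity -/

lemma bilin_pos {ι : Type} (C : ι → Submodule ℝ H) (hC : ⨆ i, C i = ⊤)
    (φ : H →ₗ[ℝ] H →ₗ[ℝ] ℝ)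
    (orth : ∀ i j, i ≠ j → ∀ x ∈ C i, ∀ y ∈ C j, φ x y = 0)
    (pos : ∀ i, ∀ x ∈ C i, x ≠ 0 → 0 < φ x x) (x : H) (hx : x ≠ 0) : 0 < φ x x := by
  classical
  have hm : x ∈ ⨆ i, C i := hC ▸ Submodule.mem_top
  obtain ⟨f, hf, rfl⟩ := (Submodule.mem_iSup_iff_exists_finsupp _ _).1 hm
  have e : φ (f.sum fun _ xi => xi) (f.sum fun _ xi => xi) = ∑ i ∈ f.support, φ (f i) (f i) := by
    simp only [Finsupp.sum, map_sum, LinearMap.sum_apply]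
    refine Finset.sum_congr rfl fun i hi => ?_
    exact Finset.sum_eq_single i (fun j _ hj => orth _ _ hj _ (hf _) _ (hf _))
      (fun h => absurd hi h)
  rw [e]
  refine Finset.sum_pos (fun i hi => pos i _ (hf i) (Finsupp.mem_support_iff.1 hi)) ?_
  by_contra hne
  rw [Finset.not_nonempty_iff_eq_empty] at hne
  apply hx
  simp [Finsupp.sum, hne]

lemma bilin_symm {ι : Type} (C : ι → Submodule ℝ H) (hC : ⨆ i, C i = ⊤)
    (φ : H →ₗ[ℝ] H →ₗ[ℝ] ℝ)
    (hs : ∀ i j, ∀ x ∈ C i, ∀ y ∈ C j, φ x y = φ y x) (x y : H) : φ x y = φ y x := by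
  have h1 : ∀ i, ∀ x ∈ C i, ∀ y, φ x y = φ y x := by
    intro i x hx y
    have : ⨆ j, C j ≤ LinearMap.eqLocus (φ x) (φ.flip x) := iSup_le fun j y hy => hs i j x hx y hy
    exact this (hC ▸ Submodule.mem_top)
  have : ⨆ j, C j ≤ LinearMap.eqLocus (φ.flip y) (φ y) := iSup_le fun j x hx => h1 j x hx y
  exact this (hC ▸ Submodule.mem_top)

lemma skew_pow {N : H →ₗ[ℝ] H} (hN : ∀ x y, ψ (N x) y + ψ x (N y) = 0) (r : ℕ) :
    ∀ x y, ψ ((N ^ r) x) y = (-1 : ℝ) ^ r * ψ x ((N ^ r) y) := by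
  induction r with
  | zero => intro x y; simp
  | succ r ih =>
    intro x y
    have := hN ((N ^ r) x) y
    rw [pow_succ_app, pow_succ_app', eq_neg_of_add_eq_zero_left this, ih, pow_succ]
    ring

lemma psi_move (h : IsHL Hgr N₁ N₂) (hψ : IsPolarization Hgr N₁ N₂ ψ) (r s m n : ℕ) (x y : H) :
    ψ ((N₁ ^ r) ((N₂ ^ s) x)) ((N₁ ^ m) ((N₂ ^ n) y)) =
      (-1 : ℝ) ^ (r + s) * ψ x ((N₁ ^ (r + m)) ((N₂ ^ (s + n)) y)) := by
  rw [skew_pow hψ.skew₁, skew_pow hψ.skew₂, ← pow_add_app, ← pow_comm_app h.comm,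
    ← pow_add_app, pow_add]
  ring

lemma psi_orth (h : IsHL Hgr N₁ N₂) (hψ : IsPolarization Hgr N₁ N₂ ψ) {A B A' B' : ℕ}
    {x y : H} (hx : x ∈ Q Hgr N₁ N₂ A B) (hy : y ∈ Q Hgr N₁ N₂ A' B') (m n : ℕ)
    (hne : ¬ (A = m + 1 ∧ A' = m + 1 ∧ B = n + 1 ∧ B' = n + 1)) :
    ψ x ((N₁ ^ m) ((N₂ ^ n) y)) = 0 := by
  by_cases h1 : A' ≤ m ∨ B' ≤ n
  · rw [Q_zero h hy h1, map_zero]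
  by_cases h2 : A ≤ m ∨ B ≤ n
  · have := psi_move h hψ m n 0 0 x y
    rw [Q_zero h hx h2] at this
    simp only [map_zero, LinearMap.zero_apply, add_zero] at this
    rcases mul_eq_zero.1 this.symm with h | h
    · exact absurd h (by positivity)
    · exact h
  refine hψ.orth _ _ _ _ ?_ _ (mem_Q.1 hx).1 _ (gen_mem h hy m n)
  omega

/-- The pieces `N₁^r N₂^s P_{a,b}` -/
def Cc (Hgr : ℤ → ℤ → Submodule ℝ H) (N₁ N₂ : H →ₗ[ℝ] H) (i : ℕ × ℕ × ℕ × ℕ) :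
    Submodule ℝ H :=
  Submodule.map ((N₁ ^ i.2.2.1) ∘ₗ (N₂ ^ i.2.2.2)) (prim Hgr N₁ N₂ i.1 i.2.1)

lemma Cc_top (h : IsHL Hgr N₁ N₂) : ⨆ i, Cc Hgr N₁ N₂ i = ⊤ := by
  refine h.span_top _ ?_
  intro a b r s p hp
  exact Submodule.mem_iSup_of_mem (a, b, r, s) ⟨p, hp, rfl⟩

lemma phi_gen (h : IsHL Hgr N₁ N₂) (hψ : IsPolarization Hgr N₁ N₂ ψ) (hw : IsW Hgr N₁ N₂ w)
    {a b r r' s s' : ℕ} (hr : r + r' = a) (hs : s + s' = b) {x y : H}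
    (hy : y ∈ prim Hgr N₁ N₂ a b) :
    ψ ((N₁ ^ r) ((N₂ ^ s) x)) (w ((N₁ ^ r) ((N₂ ^ s) y))) =
      (((r.factorial : ℝ) / (r'.factorial : ℝ)) *
      ((s.factorial : ℝ) / (s'.factorial : ℝ))) * ψ x (((N₁ ^ a) ∘ₗ (N₂ ^ b)) y) := by
  subst hr hs
  rw [prim_eq_Q] at hy
  rw [hw.app (r := r) (r' := r') (s := s) (s' := s') (by omega) (by omega) hy, map_smul,
    psi_move h hψ, LinearMap.comp_apply, smul_eq_mul]
  have e1 : ((-1 : ℝ) ^ r) * (-1) ^ r = 1 := by rw [← mul_pow]; simp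
  have e2 : ((-1 : ℝ) ^ s) * (-1) ^ s = 1 := by rw [← mul_pow]; simp
  rw [pow_add]
  linear_combination (((r.factorial : ℝ) / (r'.factorial : ℝ)) *
      ((s.factorial : ℝ) / (s'.factorial : ℝ))) *
      ψ x ((N₁ ^ (r + r')) ((N₂ ^ (s + s')) y)) * (((-1 : ℝ) ^ s) * (-1) ^ s * e1 + e2)

lemma phi_orth (h : IsHL Hgr N₁ N₂) (hψ : IsPolarization Hgr N₁ N₂ ψ) (hw : IsW Hgr N₁ N₂ w)
    (i j : ℕ × ℕ × ℕ × ℕ) (hij : i ≠ j) : ∀ x ∈ Cc Hgr N₁ N₂ i, ∀ y ∈ Cc Hgr N₁ N₂ j,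
      ψ x (w y) = 0 := by
  obtain ⟨a, b, r, s⟩ := i
  obtain ⟨a', b', m, n⟩ := j
  rintro _ ⟨x, hx, rfl⟩ _ ⟨y, hy, rfl⟩
  simp only [SetLike.mem_coe, prim_eq_Q] at hx hy
  simp only [LinearMap.comp_apply]
  by_cases hrs : a' + 1 ≤ m ∨ b' + 1 ≤ n
  · rw [Q_zero h hy hrs]; simp
  push Not at hrs
  obtain ⟨m', rfl⟩ := Nat.exists_eq_add_of_le (Nat.lt_succ_iff.1 hrs.1)
  obtain ⟨n', rfl⟩ := Nat.exists_eq_add_of_le (Nat.lt_succ_iff.1 hrs.2)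
  rw [hw.app (r := m) (r' := m') (s := n) (s' := n') (by omega) (by omega) hy, map_smul,
    psi_move h hψ, psi_orth h hψ hx hy]
  · simp
  · rintro ⟨h1, h2, h3, h4⟩
    apply hij
    simp only [Prod.mk.injEq]
    omega

lemma phi_symm (h : IsHL Hgr N₁ N₂) (hψ : IsPolarization Hgr N₁ N₂ ψ) (hw : IsW Hgr N₁ N₂ w)
    (x y : H) : ψ x (w y) = ψ y (w x) := by
  refine bilin_symm _ (Cc_top h) (ψ.compl₂ w) ?_ x y
  intro i j x hx y hy
  simp only [LinearMap.compl₂_apply]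
  by_cases hij : i = j
  · subst hij
    obtain ⟨a, b, r, s⟩ := i
    obtain ⟨x, hx, rfl⟩ := hx
    obtain ⟨y, hy, rfl⟩ := hy
    simp only [SetLike.mem_coe] at hx hy
    simp only [LinearMap.comp_apply]
    by_cases hrs : a + 1 ≤ r ∨ b + 1 ≤ s
    · rw [Q_zero h (by rwa [← prim_eq_Q]) hrs, Q_zero h (y := y) (by rwa [← prim_eq_Q]) hrs]
    push Not at hrs
    obtain ⟨r', rfl⟩ := Nat.exists_eq_add_of_le (Nat.lt_succ_iff.1 hrs.1)
    obtain ⟨s', rfl⟩ := Nat.exists_eq_add_of_le (Nat.lt_succ_iff.1 hrs.2)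
    rw [phi_gen h hψ hw rfl rfl hy, phi_gen h hψ hw rfl rfl hx, hψ.primSymm _ _ x hx y hy]
  · rw [phi_orth h hψ hw i j hij x hx y hy, phi_orth h hψ hw j i (Ne.symm hij) y hy x hx]

lemma phi_pos (h : IsHL Hgr N₁ N₂) (hψ : IsPolarization Hgr N₁ N₂ ψ) (hw : IsW Hgr N₁ N₂ w)
    (x : H) (hx : x ≠ 0) : 0 < ψ x (w x) := by
  refine bilin_pos _ (Cc_top h) (ψ.compl₂ w) (fun i j hij x hx y hy =>
    phi_orth h hψ hw i j hij x hx y hy) ?_ x hx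
  rintro ⟨a, b, r, s⟩ _ ⟨x, hx, rfl⟩ hne
  simp only [SetLike.mem_coe] at hx
  simp only [LinearMap.comp_apply, LinearMap.compl₂_apply] at hne ⊢
  by_cases hrs : a + 1 ≤ r ∨ b + 1 ≤ s
  · exact absurd (Q_zero h (by rwa [← prim_eq_Q]) hrs) hne
  push Not at hrs
  obtain ⟨r', rfl⟩ := Nat.exists_eq_add_of_le (Nat.lt_succ_iff.1 hrs.1)
  obtain ⟨s', rfl⟩ := Nat.exists_eq_add_of_le (Nat.lt_succ_iff.1 hrs.2)
  rw [phi_gen h hψ hw rfl rfl hx]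
  refine mul_pos (by positivity) (hψ.primPosDef _ _ x hx ?_)
  rintro rfl
  simp at hne

lemma phi_adj (hd : IsDifferential Hgr N₁ N₂ ψ dd) (hi : w ∘ₗ winv = LinearMap.id) (x y : H) :
    ψ (dd x) (w y) = ψ x (w (dstar w winv dd y)) := by
  have hi' : ∀ x, w (winv x) = x := fun x => LinearMap.congr_fun hi x
  have := hd.skew x (w y)
  simp only [dstar, LinearMap.neg_apply, LinearMap.comp_apply, map_neg, hi']
  linarith

lemma harm (h : IsHL Hgr N₁ N₂) (hψ : IsPolarization Hgr N₁ N₂ ψ) (hw : IsW Hgr N₁ N₂ w)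
    (hd : IsDifferential Hgr N₁ N₂ ψ dd) (hi : w ∘ₗ winv = LinearMap.id) (x : H)
    (hx : lap w winv dd x = 0) : dd x = 0 ∧ dstar w winv dd x = 0 := by
  have nn : ∀ y, 0 ≤ ψ y (w y) := fun y => by
    by_cases hy : y = 0
    · simp [hy]
    · exact (phi_pos h hψ hw y hy).le
  have e : ψ x (w (lap w winv dd x)) = ψ (dstar w winv dd x) (w (dstar w winv dd x)) +
      ψ (dd x) (w (dd x)) := by
    simp only [lap, LinearMap.add_apply, LinearMap.comp_apply, map_add]
    rw [← phi_adj hd hi x (dd x), phi_symm h hψ hw x, phi_adj hd hi]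
  rw [hx] at e
  simp only [map_zero] at e
  have n1 := nn (dd x)
  have n2 := nn (dstar w winv dd x)
  constructor
  · by_contra hne
    have := phi_pos h hψ hw _ hne
    linarith
  · by_contra hne
    have := phi_pos h hψ hw _ hne
    linarith

lemma hodge (h : IsHL Hgr N₁ N₂) (hψ : IsPolarization Hgr N₁ N₂ ψ) (hw : IsW Hgr N₁ N₂ w)
    (hd : IsDifferential Hgr N₁ N₂ ψ dd) (hi : w ∘ₗ winv = LinearMap.id)
    (hi2 : winv ∘ₗ w = LinearMap.id) (a b : ℤ) (y : H)
    (hy : y ∈ Zc Hgr dd a b) : ∃ x ∈ Kc Hgr w winv dd a b, y - x ∈ Bc Hgr dd a b := by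
  have := h.findim
  let φ : LinearMap.BilinForm ℝ H := ψ.compl₂ w
  have hφ : ∀ x y, φ x y = ψ x (w y) := fun x y => rfl
  have hsymm : φ.IsSymm := ⟨fun x y => by
    simpa [hφ] using phi_symm h hψ hw x y⟩
  have hnd : (φ.restrict (Bc Hgr dd a b)).Nondegenerate := by
    refine LinearMap.BilinForm.Nondegenerate.ofSeparatingLeft ?_
    intro x hx
    by_contra hne
    have := phi_pos h hψ hw x (by simpa using hne)
    have h0 := hx x
    rw [LinearMap.BilinForm.restrict_apply] at h0
    exact absurd h0 this.ne'
  have hc := LinearMap.BilinForm.isCompl_orthogonal_of_restrict_nondegenerate hsymm.isRefl hnd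
  have hyt : y ∈ Bc Hgr dd a b ⊔ φ.orthogonal (Bc Hgr dd a b) := by
    rw [hc.sup_eq_top]; trivial
  obtain ⟨u, hu, z, hz, rfl⟩ := Submodule.mem_sup.1 hyt
  have hug : u ∈ Hgr a b := by
    obtain ⟨v, hv, rfl⟩ := hu
    have := hd.mem _ _ v hv
    simpa using this
  have hud : dd u = 0 := by
    obtain ⟨v, hv, rfl⟩ := hu
    exact hd.sq v
  obtain ⟨hy1, hy2⟩ := hy
  have hzg : z ∈ Hgr a b := by
    have := Submodule.sub_mem _ hy2 hug
    simpa using this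
  have hzd : dd z = 0 := by
    have : dd (u + z) = 0 := hy1
    rwa [map_add, hud, zero_add] at this
  have hzs : dstar w winv dd z = 0 := by
    by_contra hne
    have hp := phi_pos h hψ hw _ hne
    rw [← phi_adj hd hi] at hp
    have := hz _ (Submodule.mem_map_of_mem (f := dd) (dstar_mem h hw hi2 hd a b z hzg))
    exact absurd this hp.ne'
  refine ⟨z, ⟨?_, hzg⟩, by simpa using hu⟩
  simp [lap, hzd, hzs]
end

end HLS

open HLS in
/-- let `d` be a differential on a polarized bigraded Hodge–Lefschetz
structure `(H, N₁, N₂, ψ)`, and let `L_{a,b} = ker(d : H_{a,b} → H_{a-1,b-1})/d(H_{a+1,b+1})`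
be the cohomology. Then `N₁`, `N₂`, `ψ` descend to `L`, the result is again a polarized
bigraded Hodge–Lefschetz structure, and under the isomorphism `L_{a,b} ≅ ker Δ ∩ H_{a,b}` the
primitive part of `L_{a,b}` corresponds to `ker Δ ∩ P_{a,b}`.  (All assertions about the
quotients `L_{a,b}` are expressed on the level of cocycles, modulo coboundaries.) -/
theorem statement16
    {H : Type} [AddCommGroup H] [Module ℝ H]
    (Hgr : ℤ → ℤ → Submodule ℝ H) (N₁ N₂ : H →ₗ[ℝ] H)
    (hHL : IsHL Hgr N₁ N₂)
    (ψ : H →ₗ[ℝ] H →ₗ[ℝ] ℝ) (hψ : IsPolarization Hgr N₁ N₂ ψ)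
    (w : H →ₗ[ℝ] H) (hw : IsW Hgr N₁ N₂ w)
    (winv : H →ₗ[ℝ] H) (hwinv : winv ∘ₗ w = LinearMap.id ∧ w ∘ₗ winv = LinearMap.id)
    (dd : H →ₗ[ℝ] H) (hd : IsDifferential Hgr N₁ N₂ ψ dd) :
    -- `N₁` and `N₂` descend to well-defined operators on `L`
    (∀ a b : ℤ,
      (∀ x ∈ Zc Hgr dd a b, N₁ x ∈ Zc Hgr dd (a - 2) b) ∧
      (∀ x ∈ Bc Hgr dd a b, N₁ x ∈ Bc Hgr dd (a - 2) b) ∧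
      (∀ x ∈ Zc Hgr dd a b, N₂ x ∈ Zc Hgr dd a (b - 2)) ∧
      (∀ x ∈ Bc Hgr dd a b, N₂ x ∈ Bc Hgr dd a (b - 2))) ∧
    -- `ψ` descends to a well-defined bilinear form on `L`
    (∀ a b a' b' : ℤ,
      (∀ x ∈ Bc Hgr dd a b, ∀ y ∈ Zc Hgr dd a' b', ψ x y = 0) ∧
      (∀ x ∈ Zc Hgr dd a b, ∀ y ∈ Bc Hgr dd a' b', ψ x y = 0)) ∧
    -- `N₁^a : L_{a,b} → L_{-a,b}` is an isomorphism for `a ≥ 0`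
    (∀ (a : ℕ) (b : ℤ),
      (∀ x ∈ Zc Hgr dd (a : ℤ) b,
        (N₁ ^ a) x ∈ Bc Hgr dd (-(a : ℤ)) b → x ∈ Bc Hgr dd (a : ℤ) b) ∧
      (∀ y ∈ Zc Hgr dd (-(a : ℤ)) b,
        ∃ x ∈ Zc Hgr dd (a : ℤ) b, y - (N₁ ^ a) x ∈ Bc Hgr dd (-(a : ℤ)) b)) ∧
    -- `N₂^b : L_{a,b} → L_{a,-b}` is an isomorphism for `b ≥ 0`
    (∀ (a : ℤ) (b : ℕ),
      (∀ x ∈ Zc Hgr dd a (b : ℤ),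
        (N₂ ^ b) x ∈ Bc Hgr dd a (-(b : ℤ)) → x ∈ Bc Hgr dd a (b : ℤ)) ∧
      (∀ y ∈ Zc Hgr dd a (-(b : ℤ)),
        ∃ x ∈ Zc Hgr dd a (b : ℤ), y - (N₂ ^ b) x ∈ Bc Hgr dd a (-(b : ℤ)))) ∧
    -- the induced form `(x, y) ↦ ψ(x, N₁^a N₂^b y)` is symmetric and positive definite on
    -- the primitive part of `L_{a,b}` (classes `[x]` with `N₁^{a+1}[x] = 0`, `N₂^{b+1}[x] = 0`)
    (∀ a b : ℕ,
      (∀ x ∈ Zc Hgr dd (a : ℤ) (b : ℤ), ∀ y ∈ Zc Hgr dd (a : ℤ) (b : ℤ),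
        (N₁ ^ (a + 1)) x ∈ Bc Hgr dd (-(a : ℤ) - 2) (b : ℤ) →
        (N₂ ^ (b + 1)) x ∈ Bc Hgr dd (a : ℤ) (-(b : ℤ) - 2) →
        (N₁ ^ (a + 1)) y ∈ Bc Hgr dd (-(a : ℤ) - 2) (b : ℤ) →
        (N₂ ^ (b + 1)) y ∈ Bc Hgr dd (a : ℤ) (-(b : ℤ) - 2) →
        ψ x (((N₁ ^ a) ∘ₗ (N₂ ^ b)) y) = ψ y (((N₁ ^ a) ∘ₗ (N₂ ^ b)) x)) ∧
      (∀ x ∈ Zc Hgr dd (a : ℤ) (b : ℤ),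
        (N₁ ^ (a + 1)) x ∈ Bc Hgr dd (-(a : ℤ) - 2) (b : ℤ) →
        (N₂ ^ (b + 1)) x ∈ Bc Hgr dd (a : ℤ) (-(b : ℤ) - 2) →
        x ∉ Bc Hgr dd (a : ℤ) (b : ℤ) →
        0 < ψ x (((N₁ ^ a) ∘ₗ (N₂ ^ b)) x))) ∧
    -- the natural map `ker Δ ∩ H_{a,b} → L_{a,b}` is an isomorphism ...
    (∀ a b : ℤ,
      (∀ x ∈ Kc Hgr w winv dd a b, x ∈ Zc Hgr dd a b) ∧
      (∀ x ∈ Kc Hgr w winv dd a b, x ∈ Bc Hgr dd a b → x = 0) ∧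
      (∀ y ∈ Zc Hgr dd a b, ∃ x ∈ Kc Hgr w winv dd a b, y - x ∈ Bc Hgr dd a b)) ∧
    -- ... under which the primitive part of `L_{a,b}` corresponds to `ker Δ ∩ P_{a,b}`
    (∀ a b : ℕ, ∀ x ∈ Kc Hgr w winv dd (a : ℤ) (b : ℤ),
      (((N₁ ^ (a + 1)) x ∈ Bc Hgr dd (-(a : ℤ) - 2) (b : ℤ)) ∧
        ((N₂ ^ (b + 1)) x ∈ Bc Hgr dd (a : ℤ) (-(b : ℤ) - 2))) ↔
      x ∈ prim Hgr N₁ N₂ a b) := by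
  obtain ⟨hi, hi'⟩ := hwinv
  have hd1 : ∀ x, dd (N₁ x) = N₁ (dd x) := fun x => LinearMap.congr_fun hd.commN₁ x
  have hd2 : ∀ x, dd (N₂ x) = N₂ (dd x) := fun x => LinearMap.congr_fun hd.commN₂ x
  have Z1 : ∀ a b : ℤ, ∀ x ∈ Zc Hgr dd a b, N₁ x ∈ Zc Hgr dd (a - 2) b := by
    rintro a b x ⟨hx, hg⟩
    have hx : dd x = 0 := hx
    exact ⟨by simp [hd1, hx], hHL.mapN₁ a b x hg⟩
  have Z2 : ∀ a b : ℤ, ∀ x ∈ Zc Hgr dd a b, N₂ x ∈ Zc Hgr dd a (b - 2) := by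
    rintro a b x ⟨hx, hg⟩
    have hx : dd x = 0 := hx
    exact ⟨by simp [hd2, hx], hHL.mapN₂ a b x hg⟩
  have B1 : ∀ a b : ℤ, ∀ x ∈ Bc Hgr dd a b, N₁ x ∈ Bc Hgr dd (a - 2) b := by
    rintro a b _ ⟨v, hv, rfl⟩
    exact ⟨N₁ v, mem_cast (hHL.mapN₁ _ _ v hv) (by ring) rfl, hd1 v⟩
  have B2 : ∀ a b : ℤ, ∀ x ∈ Bc Hgr dd a b, N₂ x ∈ Bc Hgr dd a (b - 2) := by
    rintro a b _ ⟨v, hv, rfl⟩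
    exact ⟨N₂ v, mem_cast (hHL.mapN₂ _ _ v hv) rfl (by ring), hd2 v⟩
  have P1 : ∀ S : ℤ → ℤ → Submodule ℝ H, (∀ a b : ℤ, ∀ x ∈ S a b, N₁ x ∈ S (a - 2) b) →
      ∀ k : ℕ, ∀ a b c : ℤ, a - 2 * k = c → ∀ x ∈ S a b, (N₁ ^ k) x ∈ S c b := by
    intro S hS k
    induction k with
    | zero => rintro a b c rfl x hx; simpa using hx
    | succ k ih =>
      rintro a b c rfl x hx
      rw [pow_succ_app]
      exact mem_cast (hS _ _ _ (ih a b _ rfl x hx)) (by push_cast; ring) rfl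
  have P2 : ∀ S : ℤ → ℤ → Submodule ℝ H, (∀ a b : ℤ, ∀ x ∈ S a b, N₂ x ∈ S a (b - 2)) →
      ∀ k : ℕ, ∀ a b c : ℤ, b - 2 * k = c → ∀ x ∈ S a b, (N₂ ^ k) x ∈ S a c := by
    intro S hS k
    induction k with
    | zero => rintro a b c rfl x hx; simpa using hx
    | succ k ih =>
      rintro a b c rfl x hx
      rw [pow_succ_app]
      exact mem_cast (hS _ _ _ (ih a b _ rfl x hx)) rfl (by push_cast; ring)
  have BZ : ∀ a b a' b' : ℤ, ∀ x ∈ Bc Hgr dd a b, ∀ y ∈ Zc Hgr dd a' b', ψ x y = 0 := by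
    rintro a b a' b' _ ⟨v, hv, rfl⟩ y ⟨hy, -⟩
    have hy : dd y = 0 := hy
    have := hd.skew v y
    simpa [hy] using this
  have ZB : ∀ a b a' b' : ℤ, ∀ x ∈ Zc Hgr dd a b, ∀ y ∈ Bc Hgr dd a' b', ψ x y = 0 := by
    rintro a b a' b' x ⟨hx, -⟩ _ ⟨v, hv, rfl⟩
    have hx : dd x = 0 := hx
    have := hd.skew x v
    simpa [hx] using this
  have KZ : ∀ a b : ℤ, ∀ x ∈ Kc Hgr w winv dd a b, x ∈ Zc Hgr dd a b := by
    rintro a b x ⟨hx, hg⟩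
    exact ⟨(harm hHL hψ hw hd hi' x hx).1, hg⟩
  have KB : ∀ a b : ℤ, ∀ x ∈ Kc Hgr w winv dd a b, x ∈ Bc Hgr dd a b → x = 0 := by
    rintro a b x ⟨hx, hg⟩ ⟨v, hv, rfl⟩
    have hs := (harm hHL hψ hw hd hi' _ hx).2
    have := phi_adj hd hi' v (dd v)
    rw [hs] at this
    simp only [map_zero] at this
    by_contra hne
    exact absurd this (phi_pos hHL hψ hw _ hne).ne'
  have hodge' := hodge hHL hψ hw hd hi' hi
  have K1 : ∀ a b : ℤ, ∀ x ∈ Kc Hgr w winv dd a b, N₁ x ∈ Kc Hgr w winv dd (a - 2) b := by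
    rintro a b x ⟨hx, hg⟩
    have hx : lap w winv dd x = 0 := hx
    exact ⟨by simp [lap_comm₁ hHL hw hi hd, hx], hHL.mapN₁ a b x hg⟩
  have K2 : ∀ a b : ℤ, ∀ x ∈ Kc Hgr w winv dd a b, N₂ x ∈ Kc Hgr w winv dd a (b - 2) := by
    rintro a b x ⟨hx, hg⟩
    have hx : lap w winv dd x = 0 := hx
    exact ⟨by simp [lap_comm₂ hHL hw hi hd, hx], hHL.mapN₂ a b x hg⟩
  have lp1 : ∀ (k : ℕ) x, (N₁ ^ k) (lap w winv dd x) = lap w winv dd ((N₁ ^ k) x) := by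
    intro k x
    have := pow_comm_app (N := N₁) (K := lap w winv dd)
      (by ext x; exact (lap_comm₁ hHL hw hi hd x).symm) k 1 x
    simpa using this
  have lp2 : ∀ (k : ℕ) x, (N₂ ^ k) (lap w winv dd x) = lap w winv dd ((N₂ ^ k) x) := by
    intro k x
    have := pow_comm_app (N := N₂) (K := lap w winv dd)
      (by ext x; exact (lap_comm₂ hHL hw hi hd x).symm) k 1 x
    simpa using this
  have prim' : ∀ a b : ℕ, ∀ x ∈ Kc Hgr w winv dd (a : ℤ) (b : ℤ),
      (((N₁ ^ (a + 1)) x ∈ Bc Hgr dd (-(a : ℤ) - 2) (b : ℤ)) ∧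
        ((N₂ ^ (b + 1)) x ∈ Bc Hgr dd (a : ℤ) (-(b : ℤ) - 2))) ↔
      x ∈ prim Hgr N₁ N₂ a b := by
    intro a b x hx
    constructor
    · rintro ⟨h1, h2⟩
      refine ⟨⟨hx.2, ?_⟩, ?_⟩
      · exact KB _ _ _ (P1 _ K1 (a + 1) _ _ _ (by push_cast; ring) x hx) h1
      · exact KB _ _ _ (P2 _ K2 (b + 1) _ _ _ (by push_cast; ring) x hx) h2
    · rintro ⟨⟨-, h1⟩, h2⟩
      have h1 : (N₁ ^ (a + 1)) x = 0 := h1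
      have h2 : (N₂ ^ (b + 1)) x = 0 := h2
      rw [h1, h2]
      exact ⟨Submodule.zero_mem _, Submodule.zero_mem _⟩
  -- replacement of a primitive class by its harmonic representative
  have rep : ∀ a b : ℕ, ∀ x ∈ Zc Hgr dd (a : ℤ) (b : ℤ),
        (N₁ ^ (a + 1)) x ∈ Bc Hgr dd (-(a : ℤ) - 2) (b : ℤ) →
        (N₂ ^ (b + 1)) x ∈ Bc Hgr dd (a : ℤ) (-(b : ℤ) - 2) →
        ∃ z ∈ prim Hgr N₁ N₂ a b, z ∈ Zc Hgr dd (a : ℤ) (b : ℤ) ∧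
          x - z ∈ Bc Hgr dd (a : ℤ) (b : ℤ) := by
    intro a b x hx h1 h2
    obtain ⟨z, hz, hxz⟩ := hodge' _ _ x hx
    refine ⟨z, (prim' a b z hz).1 ⟨?_, ?_⟩, KZ _ _ z hz, hxz⟩
    · have := P1 _ B1 (a + 1) _ _ (-(a : ℤ) - 2) (by push_cast; ring) _ hxz
      have := Submodule.sub_mem _ h1 this
      simpa using this
    · have := P2 _ B2 (b + 1) _ _ (-(b : ℤ) - 2) (by push_cast; ring) _ hxz
      have := Submodule.sub_mem _ h2 this
      simpa using this
  have psieq : ∀ a b : ℕ, ∀ x ∈ Zc Hgr dd (a : ℤ) (b : ℤ), ∀ y ∈ Zc Hgr dd (a : ℤ) (b : ℤ),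
      ∀ z ∈ Zc Hgr dd (a : ℤ) (b : ℤ), ∀ t ∈ Zc Hgr dd (a : ℤ) (b : ℤ),
      x - z ∈ Bc Hgr dd (a : ℤ) (b : ℤ) → y - t ∈ Bc Hgr dd (a : ℤ) (b : ℤ) →
      ψ x (((N₁ ^ a) ∘ₗ (N₂ ^ b)) y) = ψ z (((N₁ ^ a) ∘ₗ (N₂ ^ b)) t) := by
    intro a b x hx y hy z hz t ht hxz hyt
    simp only [LinearMap.comp_apply]
    have e1 := BZ _ _ _ _ _ hxz _ (P1 _ Z1 a _ _ _ rfl _ (P2 _ Z2 b _ _ _ rfl y hy))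
    have e2 := ZB _ _ _ _ _ hz _ (P1 _ B1 a _ _ _ rfl _ (P2 _ B2 b _ _ _ rfl _ hyt))
    simp only [map_sub, LinearMap.sub_apply] at e1 e2
    linarith
  refine ⟨fun a b => ⟨Z1 a b, B1 a b, Z2 a b, B2 a b⟩, fun a b a' b' => ⟨BZ a b a' b', ZB a b a' b'⟩,
    ?_, ?_, ?_, fun a b => ⟨KZ a b, KB a b, hodge' a b⟩, prim'⟩
  · intro a b
    constructor
    · intro x hx hB
      obtain ⟨z, hz, hxz⟩ := hodge' _ _ x hx
      have m := P1 _ B1 a _ _ (-(a : ℤ)) (by ring) _ hxz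
      have m2 := Submodule.sub_mem _ hB m
      simp only [map_sub, sub_sub_cancel] at m2
      have m3 := KB _ _ _ (P1 _ K1 a _ _ (-(a : ℤ)) (by ring) z hz) m2
      have m4 := (hHL.lef₁ b).inj a z hz.2 m3
      simpa [m4] using hxz
    · intro y hy
      obtain ⟨z, hz, hyz⟩ := hodge' _ _ y hy
      obtain ⟨x, hx, rfl⟩ := (hHL.lef₁ b).surj a z hz.2
      refine ⟨x, KZ _ _ x ⟨?_, hx⟩, hyz⟩
      refine (hHL.lef₁ b).inj a _ (lap_mem hHL hw hi hd _ _ x hx) ?_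
      rw [lp1]
      exact hz.1
  · intro a b
    constructor
    · intro x hx hB
      obtain ⟨z, hz, hxz⟩ := hodge' _ _ x hx
      have m := P2 _ B2 b _ _ (-(b : ℤ)) (by ring) _ hxz
      have m2 := Submodule.sub_mem _ hB m
      simp only [map_sub, sub_sub_cancel] at m2
      have m3 := KB _ _ _ (P2 _ K2 b _ _ (-(b : ℤ)) (by ring) z hz) m2
      have m4 := (hHL.lef₂ a).inj b z hz.2 m3
      simpa [m4] using hxz
    · intro y hy
      obtain ⟨z, hz, hyz⟩ := hodge' _ _ y hy
      obtain ⟨x, hx, rfl⟩ := (hHL.lef₂ a).surj b z hz.2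
      refine ⟨x, KZ _ _ x ⟨?_, hx⟩, hyz⟩
      refine (hHL.lef₂ a).inj b _ (lap_mem hHL hw hi hd _ _ x hx) ?_
      rw [lp2]
      exact hz.1
  · intro a b
    constructor
    · intro x hx y hy hx1 hx2 hy1 hy2
      obtain ⟨z, hzp, hz, hxz⟩ := rep a b x hx hx1 hx2
      obtain ⟨t, htp, ht, hyt⟩ := rep a b y hy hy1 hy2
      rw [psieq a b x hx y hy z hz t ht hxz hyt, psieq a b y hy x hx t ht z hz hyt hxz]
      exact hψ.primSymm a b z hzp t htp
    · intro x hx hx1 hx2 hne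
      obtain ⟨z, hzp, hz, hxz⟩ := rep a b x hx hx1 hx2
      rw [psieq a b x hx x hx z hz z hz hxz hxz]
      refine hψ.primPosDef a b z hzp ?_
      rintro rfl
      exact hne (by simpa using hxz)
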